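/- Let (α1, α2, α3) be a morphism of Schreier extensions from (k : K → X, f : X → M) to (k' : K' → X', f' : X' → M'). If α1 and α3 are injective, then α2 is injective. -/

import Mathlib

/-- A monoid extension: `K`, `X` additive monoids (not assumed commutative),
`M` a multiplicative monoid, `k : K → X` an injective monoid homomorphism whose image
is `{x | f x = 1}`, and `f : X → M` a surjective monoid homomorphism. -/
structure MonoidExtension {K X M : Type*} [AddMonoid K] [AddMonoid X] [Monoid M]
    (k : K → X) (f : X → M) : Prop where
  k_add : ∀ a b : K, k (a + b) = k a + k b
  k_zero : k 0 = 0
  k_inj : Function.Injective k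
  ker_eq : ∀ x : X, f x = 1 ↔ x ∈ Set.range k
  f_add : ∀ x y : X, f (x + y) = f x * f y
  f_zero : f 0 = 1
  f_surj : Function.Surjective f

/-- The set `B_m` of representatives of `m`. -/
def Reps {K X M : Type*} [AddMonoid K] [AddMonoid X] [Monoid M]
    (k : K → X) (f : X → M) (m : M) : Set X :=
  {u | f u = m ∧ ∀ x : X, f x = m → ∃! a : K, x = k a + u}

/-- A monoid extension is a Schreier extension if every `m` has a representative. -/
def IsSchreier {K X M : Type*} [AddMonoid K] [AddMonoid X] [Monoid M]
    (k : K → X) (f : X → M) : Prop :=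
  ∀ m : M, (Reps k f m).Nonempty

theorem injective_of_injOn_fiber {X M X' M' : Type*} {f : X → M} {f' : X' → M'}
    {φ : X → X'} {ψ : M → M'} (hψ : Function.Injective ψ) (hsq : ∀ x, f' (φ x) = ψ (f x))
    (hfiber : ∀ m, Set.InjOn φ (f ⁻¹' {m})) : Function.Injective φ := by
  intro x y hxy
  have hf : f x = f y := hψ (by rw [← hsq, ← hsq, hxy])
  exact hfiber (f y) hf rfl hxy

section Reps

variable {K X M K' X' M' : Type*}
  [AddMonoid K] [AddMonoid X] [Monoid M] [AddMonoid K'] [AddMonoid X'] [Monoid M']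
  {k : K → X} {f : X → M} {k' : K' → X'} {f' : X' → M'}
  {α1 : K → K'} {α2 : X → X'}

/-- In the coordinates `a ↦ k a + u` and `a' ↦ k' a' + α2 u` on the fibres over `m` and `m'`,
the map `α2` becomes `α1`. -/
theorem injOn_fiber_of_mem_reps {m : M} {m' : M'} {u : X}
    (hu : u ∈ Reps k f m) (hu' : α2 u ∈ Reps k' f' m')
    (hadd : ∀ x y, α2 (x + y) = α2 x + α2 y) (hk : ∀ a, α2 (k a) = k' (α1 a))
    (hmaps : Set.MapsTo α2 (f ⁻¹' {m}) (f' ⁻¹' {m'})) (h1 : Function.Injective α1) :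
    Set.InjOn α2 (f ⁻¹' {m}) := by
  have hcoord (a : K) : α2 (k a + u) = k' (α1 a) + α2 u := by rw [hadd, hk]
  intro x hx y hy hxy
  obtain ⟨a, rfl, -⟩ := hu.2 x hx
  obtain ⟨b, rfl, -⟩ := hu.2 y hy
  have hab : α1 a = α1 b :=
    (hu'.2 _ (hmaps hx)).unique (hcoord a) (hxy.trans (hcoord b))
  rw [h1 hab]

theorem short_five_mono_general {α3 : M → M'}
    (hadd : ∀ x y, α2 (x + y) = α2 x + α2 y) (hk : ∀ a, α2 (k a) = k' (α1 a))
    (hf : ∀ x, f' (α2 x) = α3 (f x))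
    (hrep : ∀ m, ∃ u ∈ Reps k f m, α2 u ∈ Reps k' f' (α3 m))
    (h1 : Function.Injective α1) (h3 : Function.Injective α3) :
    Function.Injective α2 := by
  refine injective_of_injOn_fiber h3 hf fun m => ?_
  obtain ⟨u, hu, hu'⟩ := hrep m
  have hmaps : Set.MapsTo α2 (f ⁻¹' {m}) (f' ⁻¹' {α3 m}) :=
    fun x hx => (hf x).trans (congrArg α3 hx)
  exact injOn_fiber_of_mem_reps hu hu' hadd hk hmaps h1

end Reps

/-- Short Five Lemma for Schreier extensions, part 1 (Proposition 2.9(1)): if `α1` and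
`α3` are injective, then `α2` is injective. -/
theorem short_five_mono {K X M K' X' M' : Type*}
    [AddMonoid K] [AddMonoid X] [Monoid M] [AddMonoid K'] [AddMonoid X'] [Monoid M']
    (k : K → X) (f : X → M) (k' : K' → X') (f' : X' → M')
    (hE : MonoidExtension k f) (hE' : MonoidExtension k' f')
    (hS : IsSchreier k f) (hS' : IsSchreier k' f')
    (α1 : K → K') (α2 : X → X') (α3 : M → M')
    (hα1_add : ∀ a b : K, α1 (a + b) = α1 a + α1 b) (hα1_zero : α1 0 = 0)
    (hα2_add : ∀ x y : X, α2 (x + y) = α2 x + α2 y) (hα2_zero : α2 0 = 0)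
    (hα3_mul : ∀ m n : M, α3 (m * n) = α3 m * α3 n) (hα3_one : α3 1 = 1)
    (hsq1 : ∀ a : K, α2 (k a) = k' (α1 a))
    (hsq2 : ∀ x : X, f' (α2 x) = α3 (f x))
    (hrep : ∀ m : M, ∀ u ∈ Reps k f m, α2 u ∈ Reps k' f' (α3 m))
    (h1 : Function.Injective α1) (h3 : Function.Injective α3) :
    Function.Injective α2 :=
  short_five_mono_general hα2_add hsq1 hsq2
    (fun m => (hS m).imp fun u hu => ⟨hu, hrep m u hu⟩) h1 h3
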